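/- For every positive integer k and every nonnegative integer i, the number 1 + 2^(2^(4k)) + 2^(2^(4k+1)) + ... + 2^(2^(4k + 127 + 868i)) is divisible by 217 = 7·31. -/

import Mathlib

/-!
Modulo `217` we have `2 ^ 16 = 2`, so `n ↦ 2 ^ 2 ^ n` is periodic with period `4`, and each period
`2, 4, 16, 256` contributes `278 ≡ 61` to the sum. Since `61 * 32 ≡ -1`, a sum over `n` periods
is `-1` exactly when `n ≡ 32`.
-/

open Finset Function

section PeriodicSum

variable {M : Type*} [AddCommMonoid M] {f : ℕ → M} {c : ℕ}

theorem sum_range_add_left_of_periodic (hf : Periodic f c) (a : ℕ) :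
    ∑ j ∈ range c, f (a + j) = ∑ j ∈ range c, f j := by
  calc
    ∑ j ∈ range c, f (a + j) = ∑ m ∈ Ico a (a + c), f (m % c) := by
      simp only [sum_Ico_eq_sum_range, add_tsub_cancel_left, hf.map_mod_nat]
    _ = (((Ico a (a + c)).val.map (· % c)).map f).sum := by
      rw [Multiset.map_map]; rfl
    _ = ∑ j ∈ range c, f j :=
      congrArg (fun s ↦ (s.map f).sum) (Nat.multiset_Ico_map_mod a c)

theorem sum_range_mul_add_left_of_periodic (hf : Periodic f c) (a n : ℕ) :
    ∑ j ∈ range (c * n), f (a + j) = n • ∑ j ∈ range c, f j := by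
  induction n with
  | zero => simp
  | succ n ih =>
    simp only [Nat.mul_succ, sum_range_add, ih, succ_nsmul, ← add_assoc,
      sum_range_add_left_of_periodic hf]

end PeriodicSum

theorem periodic_pow_pow {M : Type*} [Monoid M] {x : M} {b c : ℕ} (hx : x ^ b ^ c = x) :
    Periodic (fun n ↦ x ^ b ^ n) c := fun n ↦ by
  simp only [add_comm n c, pow_add b, pow_mul, hx]

theorem sum_two_pow_two_pow_modEq (a n : ℕ) :
    ∑ j ∈ range (4 * n), 2 ^ 2 ^ (a + j) ≡ 61 * n [MOD 217] := by
  have two_pow_sixteen : (2 : ZMod 217) ^ 2 ^ 4 = 2 := by decide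
  have sum_period : ∑ j ∈ range 4, (2 : ZMod 217) ^ 2 ^ j = 61 := by decide
  rw [← ZMod.natCast_eq_natCast_iff]
  push_cast
  rw [sum_range_mul_add_left_of_periodic (periodic_pow_pow two_pow_sixteen), sum_period,
    nsmul_eq_mul, mul_comm]

theorem stmt_10_general (a n : ℕ) :
    217 ∣ 1 + ∑ j ∈ range (4 * n), 2 ^ 2 ^ (a + j) ↔ n ≡ 32 [MOD 217] := by
  have h := sum_two_pow_two_pow_modEq a n
  unfold Nat.ModEq at h ⊢
  omega

theorem stmt_10 (k i : ℕ) (hk : 0 < k) :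
    217 ∣ 1 + ∑ j ∈ Finset.range (127 + 868 * i + 1), 2 ^ (2 ^ (4 * k + j)) := by
  rw [show 127 + 868 * i + 1 = 4 * (32 + 217 * i) by ring]
  exact (stmt_10_general (4 * k) (32 + 217 * i)).mpr (by simp [Nat.ModEq])
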